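/- arXiv:1609.01919 — 6 statements merged into one kernel-verified Lean document; each statement's English description precedes it below -/
import Mathlib

section
/- If μ : (ℕ → ℕ) → ℕ satisfies Feferman's mu-property, then μ has no associate: no function α : List ℕ → ℕ is an associate of μ. -/
/-- Feferman's mu-property: if `f` has a zero, then `μ f` points to a zero of `f`. -/
def FefermanMu (μ : (ℕ → ℕ) → ℕ) : Prop :=
  ∀ f : ℕ → ℕ, (∃ n, f n = 0) → f (μ f) = 0

/-- The initial segment `⟨β 0, …, β (k-1)⟩` of `β : ℕ → ℕ` as a list. -/
def initSeg (β : ℕ → ℕ) (k : ℕ) : List ℕ := (List.range k).map β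

/-- `α : List ℕ → ℕ` is an associate of `Φ : (ℕ → ℕ) → ℕ`, and moreover a
neighbourhood function. -/
def IsAssociate (α : List ℕ → ℕ) (Φ : (ℕ → ℕ) → ℕ) : Prop :=
  (∀ β : ℕ → ℕ, ∃ k : ℕ, 0 < α (initSeg β k)) ∧
  (∀ (β : ℕ → ℕ) (k : ℕ), 0 < α (initSeg β k) → α (initSeg β k) = Φ β + 1) ∧
  (∀ σ τ : List ℕ, 0 < α σ → σ <+: τ → α τ = α σ)

/-- A functional satisfying Feferman's mu-property has no associate. -/
theorem feferman_mu_has_no_associate (μ : (ℕ → ℕ) → ℕ) (hμ : FefermanMu μ) :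
    ∀ α : List ℕ → ℕ, ¬ IsAssociate α μ := by
  rintro α ⟨h1, h2, -⟩
  obtain ⟨k, hk⟩ := h1 (fun _ => 1)
  -- agrees with the constant function 1 below `k` and at the value of `μ`, but has a zero
  let f : ℕ → ℕ := fun n => if n < k ∨ n = μ (fun _ => 1) then 1 else 0
  have hseg : initSeg f k = initSeg (fun _ => 1) k := by
    unfold initSeg
    apply List.map_congr_left
    intro n hn
    have hn' : n < k := List.mem_range.mp hn
    simp [f, hn']
  have e1 := h2 _ k hk
  have e2 := h2 f k (by rw [hseg]; exact hk)
  rw [hseg] at e2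
  have e : μ f = μ (fun _ => 1) := by omega
  have hz : f (μ f) = 0 := by
    apply hμ
    refine ⟨k + μ (fun _ => 1) + 1, if_neg ?_⟩
    omega
  rw [e] at hz
  simp [f] at hz
end

section
/- Let f : ℕ → ℕ and let t f : ℕ → ℚ be the associated monotone sequence. Then: (a) t f is nondecreasing and 0 ≤ t f k ≤ 1 for all k; and (b) for every K : ℕ such that |t f N − t f M| < 1/2 for all N, M ≥ K, one has (∃ m, f m = 0) ↔ (∃ m ≤ K, f m = 0). -/
/-- The monotone rational sequence associated to `f : ℕ → ℕ`:
`t f k = 0` if `f i ≠ 0` for all `i ≤ k`, and `t f k = 1 - 2⁻ᵏ` otherwise. -/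
def t (f : ℕ → ℕ) (k : ℕ) : ℚ :=
  if ∀ i ≤ k, f i ≠ 0 then 0 else 1 - 1 / 2 ^ k

/-- (a) `t f` is nondecreasing and stays in `[0,1]`; (b) if `K` is such that
`|t f N - t f M| < 1/2` for all `N, M ≥ K`, then `f` has a zero iff it has a
zero below `K`. -/
theorem t_properties (f : ℕ → ℕ) :
    ((∀ k, t f k ≤ t f (k + 1)) ∧ (∀ k, 0 ≤ t f k ∧ t f k ≤ 1)) ∧
    (∀ K : ℕ, (∀ N M, K ≤ N → K ≤ M → |t f N - t f M| < 1 / 2) →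
      ((∃ m, f m = 0) ↔ ∃ m ≤ K, f m = 0)) := by
  have hp : ∀ k : ℕ, (0 : ℚ) < 1 / 2 ^ k := fun k => by positivity
  have hle : ∀ k : ℕ, (1 : ℚ) / 2 ^ k ≤ 1 := fun k => by
    rw [div_le_one (by positivity)]
    exact one_le_pow₀ (by norm_num)
  have hs : ∀ k : ℕ, (1 : ℚ) / 2 ^ (k + 1) = 1 / 2 ^ k / 2 := fun k => by
    rw [pow_succ]
    field_simp
  refine ⟨⟨fun k => ?_, fun k => ?_⟩, fun K hK => ⟨?_, ?_⟩⟩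
  · unfold t
    by_cases h1 : ∀ i ≤ k, f i ≠ 0
    · rw [if_pos h1]
      split_ifs
      · exact le_refl _
      · linarith [hle (k + 1)]
    · have h2 : ¬ ∀ i ≤ k + 1, f i ≠ 0 := fun h => h1 fun i hi => h i (by omega)
      rw [if_neg h1, if_neg h2, hs]
      linarith [hp k]
  · unfold t
    split_ifs
    · norm_num
    · constructor <;> linarith [hp k, hle k]
  · rintro ⟨m, hm⟩
    by_contra hc
    have h1 : ∀ i ≤ K, f i ≠ 0 := fun i hi h => hc ⟨i, hi, h⟩
    have hmK : K < m := by
      by_contra h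
      exact h1 m (by omega) hm
    have h2 : ¬ ∀ i ≤ m, f i ≠ 0 := fun h => h m le_rfl hm
    have h := hK m K hmK.le le_rfl
    unfold t at h
    rw [if_pos h1, if_neg h2] at h
    obtain ⟨n, rfl⟩ : ∃ n, m = n + 1 := ⟨m - 1, by omega⟩
    rw [hs] at h
    have := (abs_lt.mp h).2
    linarith [hle n]
  · rintro ⟨m, _, hm⟩
    exact ⟨m, hm⟩
end

section
/- Suppose Ψ : (ℕ → ℚ) → ℕ → ℕ is a uniform modulus of convergence for monotone sequences in the unit interval, i.e., for every nondecreasing c : ℕ → ℚ with 0 ≤ c n ≤ 1 for all n and every k : ℕ, one has |c N − c M| ≤ 1/(k+1) for all N, M ≥ Ψ c k. Then for every f : ℕ → ℕ, if there exists n with f n = 0, then there exists m ≤ Ψ (t f) 2 with f m = 0. In particular, the functional f ↦ (least m ≤ Ψ (t f) 2 with f m = 0, and 0 if no such m exists) satisfies Feferman's mu-property. -/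
/-- If `Ψ` is a uniform modulus of convergence for monotone sequences in the unit
interval, then for any `f` with a zero there is a zero of `f` below `Ψ (t f) 2`;
in particular the least such zero (and `0` if none exists) defines a functional
with Feferman's mu-property. -/
theorem mu_from_uniform_modulus (Ψ : (ℕ → ℚ) → ℕ → ℕ)
    (hΨ : ∀ c : ℕ → ℚ, (∀ n, c n ≤ c (n + 1)) → (∀ n, 0 ≤ c n ∧ c n ≤ 1) →
      ∀ k N M, Ψ c k ≤ N → Ψ c k ≤ M → |c N - c M| ≤ 1 / (k + 1)) :
    (∀ f : ℕ → ℕ, (∃ n, f n = 0) → ∃ m ≤ Ψ (t f) 2, f m = 0) ∧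
    FefermanMu (fun f =>
      if h : ∃ m, m ≤ Ψ (t f) 2 ∧ f m = 0 then Nat.find h else 0) := by
  have key : ∀ f : ℕ → ℕ, (∃ n, f n = 0) → ∃ m ≤ Ψ (t f) 2, f m = 0 := by
    rintro f ⟨n, hn⟩
    by_contra! hcon
    have hpow : ∀ k : ℕ, (0 : ℚ) < 1 / 2 ^ k ∧ (1 : ℚ) / 2 ^ k ≤ 1 := by
      intro k
      refine ⟨by positivity, ?_⟩
      rw [div_le_one (by positivity)]
      exact one_le_pow₀ (by norm_num)
    have hb : ∀ k, 0 ≤ t f k ∧ t f k ≤ 1 := by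
      intro k
      have := hpow k
      unfold t
      split_ifs
      · norm_num
      · constructor <;> linarith
    have hm : ∀ k, t f k ≤ t f (k + 1) := by
      intro k
      by_cases h : ∀ i ≤ k, f i ≠ 0
      · have h0 : t f k = 0 := if_pos h
        rw [h0]
        exact (hb _).1
      · have h' : ¬ ∀ i ≤ k + 1, f i ≠ 0 := fun hh => h fun i hi => hh i (by omega)
        have h1 : t f k = 1 - 1 / 2 ^ k := if_neg h
        have h2 : t f (k + 1) = 1 - 1 / 2 ^ (k + 1) := if_neg h'
        have h3 : (1 : ℚ) / 2 ^ (k + 1) = 1 / 2 ^ k / 2 := by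
          rw [pow_succ, div_div]
        have := hpow k
        rw [h1, h2, h3]
        linarith
    have hlt : Ψ (t f) 2 < n := by
      by_contra hge
      exact hcon n (by omega) hn
    have h := hΨ (t f) hm hb 2 (n + 2) (Ψ (t f) 2) (by omega) le_rfl
    have h0 : t f (Ψ (t f) 2) = 0 := if_pos hcon
    have h1 : t f (n + 2) = 1 - 1 / 2 ^ (n + 2) :=
      if_neg fun hh => hh n (by omega) hn
    have h3 : (1 : ℚ) / 2 ^ (n + 2) = 1 / 2 ^ n / 4 := by
      rw [pow_add, div_div]
      norm_num
    have h4 := hpow n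
    have h5 := le_trans (le_abs_self _) h
    rw [h0, h1, h3] at h5
    norm_num at h5 h4
    linarith
  refine ⟨key, ?_⟩
  intro f hf
  have h : ∃ m, m ≤ Ψ (t f) 2 ∧ f m = 0 := key f hf
  simp only [dif_pos h]
  exact (Nat.find_spec h).2
end

section
/- Suppose φ : (ℕ → ℕ) → ℕ satisfies the existence-functional property. Let c : ℕ → ℚ be nondecreasing with 0 ≤ c n ≤ 1 for all n, and let k : ℕ. For K : ℕ define g K : ℕ → ℕ by g K N = 0 if c N − c K > 1/(k+1) and g K N = 1 otherwise. Then: (a) there exists K with φ (g K) ≠ 0; and (b) for every K with φ (g K) ≠ 0, one has |c N − c M| ≤ 1/(k+1) for all N, M ≥ K. Hence K(c,k) := the least K with φ (g K) ≠ 0 is a modulus of convergence for c computed from φ. -/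
/-- The existence-functional property: `φ f = 0` iff `f` has a zero. -/
def ExistsFunctional (φ : (ℕ → ℕ) → ℕ) : Prop :=
  ∀ f : ℕ → ℕ, (∃ n, f n = 0) ↔ φ f = 0

/-- From an existence functional `φ` one computes a modulus of convergence for any
nondecreasing rational sequence `c` in the unit interval: with
`g K N = 0` if `c N - c K > 1/(k+1)` and `g K N = 1` otherwise, (a) there is `K`
with `φ (g K) ≠ 0`, and (b) any such `K` is a modulus of convergence for `c`
at precision `1/(k+1)`. -/
theorem modulus_from_exists_functional (φ : (ℕ → ℕ) → ℕ)
    (hφ : ExistsFunctional φ)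
    (c : ℕ → ℚ) (hmono : ∀ n, c n ≤ c (n + 1)) (hbound : ∀ n, 0 ≤ c n ∧ c n ≤ 1)
    (k : ℕ) (g : ℕ → ℕ → ℕ)
    (hg : ∀ K N, g K N = if 1 / ((k : ℚ) + 1) < c N - c K then 0 else 1) :
    (∃ K, φ (g K) ≠ 0) ∧
    (∀ K, φ (g K) ≠ 0 → ∀ N M, K ≤ N → K ≤ M → |c N - c M| ≤ 1 / ((k : ℚ) + 1)) := by
  have hm : Monotone c := monotone_nat_of_le_succ hmono
  have key : ∀ K, φ (g K) = 0 ↔ ∃ N, 1 / ((k : ℚ) + 1) < c N - c K := by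
    intro K
    rw [← hφ (g K)]
    simp only [hg]
    simp [lt_sub_iff_add_lt]
  have hk : (0 : ℚ) < (k : ℚ) + 1 := by positivity
  constructor
  · by_contra! h
    have step : ∀ n : ℕ, ∃ N, (n : ℚ) * (1 / ((k : ℚ) + 1)) ≤ c N := by
      intro n
      induction n with
      | zero => exact ⟨0, by simpa using (hbound 0).1⟩
      | succ n ih =>
        obtain ⟨K, hK⟩ := ih
        obtain ⟨N, hN⟩ := (key K).1 (h K)
        refine ⟨N, ?_⟩
        push_cast
        linarith
    obtain ⟨N, hN⟩ := step (k + 2)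
    have h1 := (hbound N).2
    have h2 : ((k + 2 : ℕ) : ℚ) * (1 / ((k : ℚ) + 1)) > 1 := by
      push_cast
      rw [mul_one_div, gt_iff_lt, lt_div_iff₀ hk]
      linarith
    linarith
  · intro K hK N M hN hM
    have hle : ∀ N, c N - c K ≤ 1 / ((k : ℚ) + 1) := by
      intro N
      by_contra! h
      exact hK ((key K).2 ⟨N, h⟩)
    have h1 := hle N
    have h2 := hle M
    have h3 := hm hN
    have h4 := hm hM
    rw [abs_le]
    constructor <;> linarith
end

section
/- Let e be a code for a partial recursive function (Nat.Partrec.Code) and n : ℕ, and let seq e n : ℕ → ℚ be the associated halting sequence. Then: (a) seq e n is nondecreasing and 0 ≤ seq e n k ≤ 1 for all k; and (b) for every K : ℕ such that |seq e n N − seq e n M| < 1/2 for all N, M ≥ K, the computation e on input n halts (i.e., (e.eval n).Dom) if and only if the step-bounded evaluation with K steps returns a value (i.e., (Nat.Partrec.Code.evaln K e n).isSome). -/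
/-- The halting sequence associated to a partial recursive code `e` and input `n`:
`seq e n k = 1 - 2⁻ᵏ` if the step-bounded evaluation `evaln k e n` returns a value,
and `0` otherwise. -/
def seq (e : Nat.Partrec.Code) (n : ℕ) (k : ℕ) : ℚ :=
  if (Nat.Partrec.Code.evaln k e n).isSome then 1 - 1 / 2 ^ k else 0

/-- (a) `seq e n` is nondecreasing and stays in `[0,1]`; (b) if `K` is such that
`|seq e n N - seq e n M| < 1/2` for all `N, M ≥ K`, then `e` halts on `n` iff the
step-bounded evaluation with `K` steps returns a value. -/
theorem seq_properties (e : Nat.Partrec.Code) (n : ℕ) :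
    ((∀ k, seq e n k ≤ seq e n (k + 1)) ∧ (∀ k, 0 ≤ seq e n k ∧ seq e n k ≤ 1)) ∧
    (∀ K : ℕ, (∀ N M, K ≤ N → K ≤ M → |seq e n N - seq e n M| < 1 / 2) →
      ((e.eval n).Dom ↔ (Nat.Partrec.Code.evaln K e n).isSome)) := by
  have hmono : ∀ {a b : ℕ}, a ≤ b → (Nat.Partrec.Code.evaln a e n).isSome = true →
      (Nat.Partrec.Code.evaln b e n).isSome = true := by
    intro a b hab h
    obtain ⟨x, hx⟩ := Option.isSome_iff_exists.mp h
    exact Option.isSome_iff_exists.mpr ⟨x, Nat.Partrec.Code.evaln_mono hab hx⟩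
  have hle1 : ∀ k : ℕ, (1 : ℚ) / 2 ^ k ≤ 1 := by
    intro k
    rw [div_le_one (by positivity)]
    exact one_le_pow₀ (by norm_num)
  have hpos : ∀ k : ℕ, (0 : ℚ) < 1 / 2 ^ k := fun k => by positivity
  have hstep : ∀ k : ℕ, (1 : ℚ) / 2 ^ (k + 1) = 1 / 2 ^ k / 2 := by
    intro k
    rw [pow_succ]
    field_simp
  have hbd : ∀ k, 0 ≤ seq e n k ∧ seq e n k ≤ 1 := by
    intro k
    have h1 := hle1 k
    have h2 := hpos k
    unfold seq
    split_ifs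
    · constructor <;> linarith
    · constructor <;> norm_num
  refine ⟨⟨fun k => ?_, hbd⟩, fun K hK => ⟨fun hd => ?_, fun h => ?_⟩⟩
  · by_cases h : (Nat.Partrec.Code.evaln k e n).isSome = true
    · have h' := hmono (Nat.le_succ k) h
      have h1 := hstep k
      have h2 := hpos k
      simp only [seq, if_pos h, if_pos h']
      linarith
    · have h0 : seq e n k = 0 := by simp only [seq, if_neg h]
      rw [h0]
      exact (hbd (k + 1)).1
  · by_contra hn
    obtain ⟨x, hx⟩ := Part.dom_iff_mem.mp hd
    obtain ⟨k, hk⟩ := Nat.Partrec.Code.evaln_complete.mp hx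
    have hs : (Nat.Partrec.Code.evaln (max K k + 1) e n).isSome = true :=
      hmono (a := k) (by omega) (Option.isSome_iff_exists.mpr ⟨x, hk⟩)
    have h := hK (max K k + 1) K (by omega) le_rfl
    have h0 : seq e n K = 0 := by simp only [seq, if_neg hn]
    have h1 : seq e n (max K k + 1) = 1 - 1 / 2 ^ (max K k + 1) := by
      simp only [seq, if_pos hs]
    rw [h0, h1] at h
    have h2 := (abs_lt.mp h).2
    have h3 := hstep (max K k)
    have h4 := hle1 (max K k)
    linarith
  · obtain ⟨x, hx⟩ := Option.isSome_iff_exists.mp h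
    exact Part.dom_iff_mem.mpr ⟨x, Nat.Partrec.Code.evaln_sound hx⟩
end

section
/- Suppose ψ : Nat.Partrec.Code → ℕ → ℕ is a modulus-of-convergence functional for all computable monotone rational sequences in the unit interval, i.e., for every code d and every q : ℕ → ℚ such that d.eval k = Part.some (Encodable.encode (q k)) for all k, with q nondecreasing and 0 ≤ q k ≤ 1 for all k, one has |q N − q M| ≤ 1/(k+1) for all k and all N, M ≥ ψ d k. Then for every code e, every n : ℕ, and every code d such that d.eval k = Part.some (Encodable.encode (seq e n k)) for all k, the computation e on input n halts (i.e., (e.eval n).Dom) if and only if (Nat.Partrec.Code.evaln (ψ d 2) e n).isSome. In other words, ψ uniformly computes a bound for the halting problem. -/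
/-- If `ψ` is a modulus-of-convergence functional for all computable monotone
rational sequences in the unit interval (presented via codes computing their
encoded values), then `ψ` uniformly computes a bound for the halting problem:
for any code `d` computing the halting sequence `seq e n`, the code `e` halts on
input `n` iff the step-bounded evaluation with `ψ d 2` steps returns a value. -/
theorem halting_bound_from_modulus (ψ : Nat.Partrec.Code → ℕ → ℕ)
    (hψ : ∀ (d : Nat.Partrec.Code) (q : ℕ → ℚ),
      (∀ k, d.eval k = Part.some (Encodable.encode (q k))) →
      (∀ k, q k ≤ q (k + 1)) → (∀ k, 0 ≤ q k ∧ q k ≤ 1) →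
      ∀ k N M, ψ d k ≤ N → ψ d k ≤ M → |q N - q M| ≤ 1 / ((k : ℚ) + 1)) :
    ∀ (e : Nat.Partrec.Code) (n : ℕ) (d : Nat.Partrec.Code),
      (∀ k, d.eval k = Part.some (Encodable.encode (seq e n k))) →
      ((e.eval n).Dom ↔ (Nat.Partrec.Code.evaln (ψ d 2) e n).isSome) := by
  intro e n d hd
  have hmono : ∀ a b : ℕ, a ≤ b → (Nat.Partrec.Code.evaln a e n).isSome →
      (Nat.Partrec.Code.evaln b e n).isSome := by
    intro a b hab h
    obtain ⟨x, hx⟩ := Option.isSome_iff_exists.1 h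
    exact Option.isSome_iff_exists.2 ⟨x, Nat.Partrec.Code.evaln_mono hab hx⟩
  have hpos : ∀ k : ℕ, (0 : ℚ) ≤ 1 / 2 ^ k := fun k => by positivity
  have hle : ∀ k : ℕ, (1 : ℚ) / 2 ^ k ≤ 1 := fun k => by
    rw [div_le_one (by positivity)]
    exact one_le_pow₀ (by norm_num)
  have hbd : ∀ k, 0 ≤ seq e n k ∧ seq e n k ≤ 1 := by
    intro k
    have h1 := hpos k
    have h2 := hle k
    unfold seq
    split_ifs
    · constructor <;> linarith
    · constructor <;> norm_num
  have hstep : ∀ k, seq e n k ≤ seq e n (k + 1) := by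
    intro k
    by_cases h : (Nat.Partrec.Code.evaln k e n).isSome
    · have h' := hmono k (k + 1) (Nat.le_succ k) h
      have h1 := hpos k
      have h3 : (1 : ℚ) / 2 ^ (k + 1) = 1 / 2 ^ k / 2 := by
        rw [pow_succ, div_div]
      unfold seq
      rw [if_pos h, if_pos h', h3]
      linarith
    · have h0 : seq e n k = 0 := if_neg h
      rw [h0]
      exact (hbd (k + 1)).1
  constructor
  · intro h
    by_contra hn
    obtain ⟨x, hx⟩ := Part.dom_iff_mem.1 h
    obtain ⟨k, hk⟩ := Nat.Partrec.Code.evaln_complete.1 hx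
    have hk' : (Nat.Partrec.Code.evaln k e n).isSome := Option.isSome_iff_exists.2 ⟨x, hk⟩
    have hM := hmono k (ψ d 2 + k + 2) (by omega) hk'
    have key := hψ d (seq e n) hd hstep hbd 2 (ψ d 2 + k + 2) (ψ d 2) (by omega) le_rfl
    have h0 : seq e n (ψ d 2) = 0 := if_neg hn
    have h1 : seq e n (ψ d 2 + k + 2) = 1 - 1 / 2 ^ (ψ d 2 + k + 2) := if_pos hM
    have h2 : (1 : ℚ) / 2 ^ (ψ d 2 + k + 2) = 1 / 2 ^ (ψ d 2 + k) / 4 := by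
      rw [pow_add, div_div]
      norm_num
    have h3 := hle (ψ d 2 + k)
    rw [h0, h1, h2, sub_zero] at key
    have h4 := (le_abs_self _).trans key
    norm_num at h4 h3
    linarith
  · intro h
    obtain ⟨x, hx⟩ := Option.isSome_iff_exists.1 h
    exact Part.dom_iff_mem.2 ⟨x, Nat.Partrec.Code.evaln_sound hx⟩
end
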